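/- Every group belonging to the class 𝒮 = 𝒯 ∪ 𝓑₁ ∪ 𝓑₂ is isomorphic to the automorphism group of some bicyclic graph. -/

import Mathlib

open SimpleGraph

/-- The automorphism of `ι → G` given by permuting coordinates by `σ`. -/
def permAut {ι G : Type} [Group G] (σ : Equiv.Perm ι) : MulAut (ι → G) where
  toFun f := f ∘ σ.symm
  invFun f := f ∘ σ
  left_inv f := by funext i; simp
  right_inv f := by funext i; simp
  map_mul' f g := rfl

/-- The action of `Equiv.Perm ι` on `ι → G` by permuting coordinates, as a homomorphism. -/
def permHom (ι G : Type) [Group G] : Equiv.Perm ι →* MulAut (ι → G) where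
  toFun := permAut
  map_one' := by ext f i; rfl
  map_mul' σ τ := by ext f i; rfl

/-- Combine two actions-by-automorphisms into one on the direct product. -/
def autProdHom {Q M N : Type} [Group Q] [Group M] [Group N]
    (φ : Q →* MulAut M) (ψ : Q →* MulAut N) : Q →* MulAut (M × N) where
  toFun q := (φ q).prodCongr (ψ q)
  map_one' := by
    show MulEquiv.prodCongr (φ 1) (ψ 1) = 1
    rw [map_one, map_one]; ext x <;> rfl
  map_mul' a b := by
    show MulEquiv.prodCongr (φ (a * b)) (ψ (a * b)) = _
    rw [map_mul, map_mul]; ext x <;> rfl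

/-- The translation action of an additive group on itself, as permutations. -/
def transPermHom (A : Type) [AddGroup A] : Multiplicative A →* Equiv.Perm A :=
  MulAction.toPermHom (Multiplicative A) A

/-- The action of (the multiplicative version of) an additive group `A` on `A → G`
by translating the coordinates. -/
def transAutHom (A G : Type) [AddGroup A] [Group G] : Multiplicative A →* MulAut (A → G) :=
  (permHom A G).comp (transPermHom A)

/-- The Klein four-group `Z₂ × Z₂` (written multiplicatively). -/
abbrev K4 : Type := Multiplicative (ZMod 2 × ZMod 2)

/-- Projection of the Klein four-group onto its first `Z₂` factor. -/
def fstK : K4 →* Multiplicative (ZMod 2) :=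
  AddMonoidHom.toMultiplicative (AddMonoidHom.fst (ZMod 2) (ZMod 2))

/-- Projection of the Klein four-group onto its second `Z₂` factor. -/
def sndK : K4 →* Multiplicative (ZMod 2) :=
  AddMonoidHom.toMultiplicative (AddMonoidHom.snd (ZMod 2) (ZMod 2))

/-- The wreath product `D ≀ (Z₂ × Z₂) = D⁴ ⋊ (Z₂ × Z₂)`: the four coordinates are indexed by
the elements of `Z₂ × Z₂`, which acts by translating the indices. -/
def wreathK4 (D : Type) [Group D] : Type :=
  (ZMod 2 × ZMod 2 → D) ⋊[transAutHom (ZMod 2 × ZMod 2) D] K4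

instance (D : Type) [Group D] : Group (wreathK4 D) :=
  inferInstanceAs (Group (_ ⋊[transAutHom (ZMod 2 × ZMod 2) D] K4))

/-- The action of `Z₂ × Z₂` on `D⁴ × H² × K²` in which the generator `a = (1,0)` sends
`(d₁,d₂,d₃,d₄,h₁,h₂,k₁,k₂)` to `(d₃,d₄,d₁,d₂,h₂,h₁,k₁,k₂)` and the generator `b = (0,1)` sends
it to `(d₂,d₁,d₄,d₃,h₁,h₂,k₂,k₁)`: the four `D`-coordinates are indexed by
`(0,0), (0,1), (1,0), (1,1) : Z₂ × Z₂` and translated, and the pairs of `H`- resp.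
`K`-coordinates are indexed by `Z₂` and translated by the first resp. second component. -/
def B2act (D H K : Type) [Group D] [Group H] [Group K] :
    K4 →* MulAut ((ZMod 2 × ZMod 2 → D) × (ZMod 2 → H) × (ZMod 2 → K)) :=
  autProdHom (transAutHom (ZMod 2 × ZMod 2) D)
    (autProdHom ((transAutHom (ZMod 2) H).comp fstK) ((transAutHom (ZMod 2) K).comp sndK))

/-- The group `(D⁴ × H² × K²) ⋊ (Z₂ × Z₂)` appearing in the class `𝓑₂`. -/
def B2group (D H K : Type) [Group D] [Group H] [Group K] : Type :=
  ((ZMod 2 × ZMod 2 → D) × (ZMod 2 → H) × (ZMod 2 → K)) ⋊[B2act D H K] K4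

instance (D H K : Type) [Group D] [Group H] [Group K] : Group (B2group D H K) :=
  inferInstanceAs (Group (_ ⋊[B2act D H K] K4))

/-- Jordan's class `𝒯`: the smallest isomorphism-closed class of groups containing the
trivial group and closed under direct products of members and wreath products `G ≀ Sₙ`
(with `Sₙ` permuting the `n` coordinates of `Gⁿ`) for members `G` and `n ≥ 2`. -/
inductive JordanT : ∀ (G : Type) [Group G], Prop where
  | triv : JordanT PUnit
  | congr {G H : Type} [Group G] [Group H] : JordanT G → (G ≃* H) → JordanT H
  | prod {G H : Type} [Group G] [Group H] : JordanT G → JordanT H → JordanT (G × H)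
  | wreath {G : Type} [Group G] (n : ℕ) (hn : 2 ≤ n) :
      JordanT G → JordanT ((Fin n → G) ⋊[permHom (Fin n) G] Equiv.Perm (Fin n))

/-- A graph is bicyclic if it is connected and its number of edges exceeds its number of
vertices by exactly one (i.e. it has cyclomatic number 2). -/
def SimpleGraph.IsBicyclic {V : Type} (G : SimpleGraph V) : Prop :=
  G.Connected ∧ G.edgeSet.ncard = Nat.card V + 1

/-- The class `𝓑₁ = {C × (D ≀ (Z₂ × Z₂)) : C, D ∈ 𝒯}` (closed under isomorphism). -/
def InB1 (G : Type) [Group G] : Prop :=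
  ∃ (C D : Type) (_ : Group C) (_ : Group D),
    JordanT C ∧ JordanT D ∧ Nonempty (G ≃* C × wreathK4 D)

/-- The class `𝓑₂ = {C × ((D⁴ × H² × K²) ⋊ (Z₂ × Z₂)) : C, D, H, K ∈ 𝒯}`
(closed under isomorphism), with the action of `Z₂ × Z₂` given by `B2act`. -/
def InB2 (G : Type) [Group G] : Prop :=
  ∃ (C D H K : Type) (_ : Group C) (_ : Group D) (_ : Group H) (_ : Group K),
    JordanT C ∧ JordanT D ∧ JordanT H ∧ JordanT K ∧ Nonempty (G ≃* C × B2group D H K)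

/-- The class `𝒮 = 𝒯 ∪ 𝓑₁ ∪ 𝓑₂`. -/
def InS (G : Type) [Group G] : Prop :=
  JordanT G ∨ InB1 G ∨ InB2 G


/-! ### Rooted trees as functional graphs -/

/-- A finite rooted tree given by its parent map. -/
structure RTree where
  V : Type
  fin : Fintype V
  p : V → V
  root : V
  proot : p root = root
  reach : ∀ v, ∃ n : ℕ, p^[n] v = root

/-- A group is realized as the automorphism group of a rooted tree. -/
def Realizes (T : RTree) (G : Type) [Group G] (ρ : G →* Equiv.Perm T.V) : Prop :=
  Function.Injective ρ ∧ ∀ f : Equiv.Perm T.V, (∀ v, f (T.p v) = T.p (f v)) ↔ ∃ g, ρ g = f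

theorem RTree.fix_root (T : RTree) (v : T.V) (h : T.p v = v) : v = T.root := by
  obtain ⟨n, hn⟩ := T.reach v
  rw [← hn, Function.iterate_fixed h]

section Forest

variable {I : Type} {B : I → Type} {T : I → RTree}

/-- vertex set of a forest -/
abbrev FV (B : I → Type) (T : I → RTree) : Type := Σ i, B i × (T i).V

/-- parent map of a forest -/
def fp (v : FV B T) : FV B T := ⟨v.1, v.2.1, (T v.1).p v.2.2⟩

theorem fp_iter (n : ℕ) (i : I) (b : B i) (t : (T i).V) :
    (fp (B := B) (T := T))^[n] ⟨i, b, t⟩ = ⟨i, b, (T i).p^[n] t⟩ := by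
  induction n generalizing t with
  | zero => rfl
  | succ n ih => simp only [Function.iterate_succ_apply]; exact ih _

theorem fp_fix (v : FV B T) : fp v = v ↔ v.2.2 = (T v.1).root := by
  obtain ⟨i, b, t⟩ := v
  constructor
  · intro h
    simp only [fp, Sigma.mk.injEq, heq_eq_eq, Prod.mk.injEq, true_and] at h
    exact (T i).fix_root _ h
  · intro h
    simp only at h
    subst h
    simp [fp, (T i).proot]

theorem fp_reach (v : FV B T) : ∃ n : ℕ, fp (fp^[n] v) = fp^[n] v := by
  obtain ⟨i, b, t⟩ := v
  obtain ⟨n, hn⟩ := (T i).reach t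
  refine ⟨n, ?_⟩
  rw [fp_fix, fp_iter]
  exact hn

theorem comm_iter {V : Type} {p f : V → V} (h : ∀ v, f (p v) = p (f v)) (n : ℕ) (v : V) :
    f (p^[n] v) = p^[n] (f v) := by
  induction n generalizing v with
  | zero => rfl
  | succ n ih => simp only [Function.iterate_succ_apply]; rw [ih, h]

/-- Each component is mapped to a component. -/
theorem forest_comp (f : Equiv.Perm (FV B T)) (h : ∀ v, f (fp v) = fp (f v)) (i : I) (b : B i) :
    ∃ (j : I) (b' : B j), ∀ t, ∃ t', f ⟨i, b, t⟩ = ⟨j, b', t'⟩ := by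
  refine ⟨(f ⟨i, b, (T i).root⟩).1, (f ⟨i, b, (T i).root⟩).2.1, fun t => ?_⟩
  obtain ⟨n, hn⟩ := (T i).reach t
  have h1 := comm_iter h n ⟨i, b, t⟩
  rw [fp_iter, hn] at h1
  rw [h1]
  obtain ⟨j, b', t'⟩ := f ⟨i, b, t⟩
  rw [fp_iter]
  exact ⟨t', rfl⟩

theorem forest_comp' (hc : Function.Injective fun i => Nat.card (T i).V)
    (f : Equiv.Perm (FV B T)) (h : ∀ v, f (fp v) = fp (f v)) (i : I) (b : B i) :
    ∃ (b' : B i), ∀ t, ∃ t', f ⟨i, b, t⟩ = ⟨i, b', t'⟩ := by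
  have hs : ∀ v, f.symm (fp v) = fp (f.symm v) := fun v => by
    rw [Equiv.symm_apply_eq, h, Equiv.apply_symm_apply]
  have key : ∀ (f : Equiv.Perm (FV B T)) (i j : I) (b : B i) (b' : B j),
      (∀ t, ∃ t', f ⟨i, b, t⟩ = ⟨j, b', t'⟩) → Nat.card (T i).V ≤ Nat.card (T j).V := by
    intro f i j b b' hh
    choose k hk using hh
    have := (T j).fin
    refine Nat.card_le_card_of_injective k fun t t' e => ?_
    have : f ⟨i, b, t⟩ = f ⟨i, b, t'⟩ := by rw [hk, hk, e]
    simpa using f.injective this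
  obtain ⟨j, b', h1⟩ := forest_comp f h i b
  obtain ⟨i2, b2, h2⟩ := forest_comp f.symm hs j b'
  have e : i2 = i := by
    obtain ⟨t', ht⟩ := h1 (T i).root
    obtain ⟨t'', ht'⟩ := h2 t'
    rw [← ht, Equiv.symm_apply_apply] at ht'
    exact (congrArg Sigma.fst ht').symm
  subst e
  have : i2 = j := hc (le_antisymm (key f _ _ _ _ h1) (key f.symm _ _ _ _ h2))
  subst this
  exact ⟨b', h1⟩

variable {G : I → Type} [∀ i, Group (G i)] {ρ : ∀ i, G i →* Equiv.Perm (T i).V}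

theorem forest_aut (hc : Function.Injective fun i => Nat.card (T i).V)
    (hρ : ∀ i, Realizes (T i) (G i) (ρ i))
    (f : Equiv.Perm (FV B T)) (h : ∀ v, f (fp v) = fp (f v)) :
    ∃ (σ : ∀ i, Equiv.Perm (B i)) (γ : ∀ i, B i → G i),
      ∀ i b t, f ⟨i, b, t⟩ = ⟨i, σ i b, ρ i (γ i (σ i b)) t⟩ := by
  have hs : ∀ v, f.symm (fp v) = fp (f.symm v) := fun v => by
    rw [Equiv.symm_apply_eq, h, Equiv.apply_symm_apply]
  choose s k hk using forest_comp' hc f h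
  choose s' k' hk' using forest_comp' hc f.symm hs
  have l1 : ∀ i b t, (s' i (s i b) = b ∧ k' i (s i b) (k i b t) = t) := by
    intro i b t
    have := hk' i (s i b) (k i b t)
    rw [← hk, Equiv.symm_apply_apply] at this
    simp only [Sigma.mk.injEq, heq_eq_eq, Prod.mk.injEq, true_and] at this
    exact ⟨this.1.symm, this.2.symm⟩
  have l2 : ∀ i b t, (s i (s' i b) = b ∧ k i (s' i b) (k' i b t) = t) := by
    intro i b t
    have := hk i (s' i b) (k' i b t)
    rw [← hk', Equiv.apply_symm_apply] at this
    simp only [Sigma.mk.injEq, heq_eq_eq, Prod.mk.injEq, true_and] at this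
    exact ⟨this.1.symm, this.2.symm⟩
  let σ : ∀ i, Equiv.Perm (B i) := fun i =>
    ⟨s i, s' i, fun b => (l1 i b (T i).root).1, fun b => (l2 i b (T i).root).1⟩
  have hg : ∀ i b, ∃ g : G i, ∀ t, ρ i g t = k i b t := by
    intro i b
    have := ((hρ i).2 ⟨k i b, k' i (s i b), fun t => (l1 i b t).2, fun t => by
      have h3 := (l2 i (s i b) t).2
      rwa [(l1 i b t).1] at h3⟩).1 (fun v => by
        have := h ⟨i, b, v⟩
        rw [hk] at this
        simp only [fp] at this
        rw [hk] at this
        simpa using this)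
    obtain ⟨g, hg⟩ := this
    exact ⟨g, fun t => by rw [hg]; rfl⟩
  choose γ hγ using hg
  refine ⟨σ, fun i b => γ i (s' i b), fun i b t => ?_⟩
  rw [hk]
  change _ = (⟨i, s i b, ρ i (γ i (s' i (s i b))) t⟩ : FV B T)
  rw [hγ, (l1 i b t).1]

/-- Data describing a group as acting on a forest. -/
structure ForestData (M : Type) [Group M] (B : I → Type) (G : I → Type)
    [∀ i, Group (G i)] where
  q : ∀ i, M →* Equiv.Perm (B i)
  g : M → ∀ i, B i → G i
  g_one : ∀ i b, g 1 i b = 1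
  g_mul : ∀ m m' i b, g (m * m') i (q i m b) = g m i (q i m b) * g m' i b
  inj : ∀ m, (∀ i, q i m = 1) → (∀ i b, g m i b = 1) → m = 1

variable {M : Type} [Group M]

/-- The action on the forest. -/
def ForestData.act (F : ForestData M B G) (ρ : ∀ i, G i →* Equiv.Perm (T i).V) :
    M →* Equiv.Perm (FV B T) :=
  MonoidHom.toHomPerm
  { toFun := fun m v => ⟨v.1, F.q v.1 m v.2.1, ρ v.1 (F.g m v.1 (F.q v.1 m v.2.1)) v.2.2⟩
    map_one' := by
      funext v
      obtain ⟨i, b, t⟩ := v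
      simp [F.g_one]
      rfl
    map_mul' := fun m m' => by
      funext v
      obtain ⟨i, b, t⟩ := v
      have := F.g_mul m m' i (F.q i m' b)
      change (⟨_, _, _⟩ : FV B T) = ⟨_, _, _⟩
      simp only [map_mul, Equiv.Perm.mul_apply]
      rw [this]
      simp }

theorem ForestData.act_apply (F : ForestData M B G) (m : M) (i : I) (b : B i) (t : (T i).V) :
    F.act ρ m ⟨i, b, t⟩ = ⟨i, F.q i m b, ρ i (F.g m i (F.q i m b)) t⟩ := rfl

theorem ForestData.act_comm (F : ForestData M B G) (hρ : ∀ i, Realizes (T i) (G i) (ρ i))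
    (m : M) (v : FV B T) : F.act ρ m (fp v) = fp (F.act ρ m v) := by
  obtain ⟨i, b, t⟩ := v
  have := ((hρ i).2 (ρ i (F.g m i (F.q i m b)))).2 ⟨_, rfl⟩ t
  simp only [fp, F.act_apply, this]
  rfl

theorem ForestData.act_inj (F : ForestData M B G) (hρ : ∀ i, Realizes (T i) (G i) (ρ i)) :
    Function.Injective (F.act ρ) := by
  rw [injective_iff_map_eq_one]
  intro m hm
  have h : ∀ i b t, F.q i m b = b ∧ ρ i (F.g m i (F.q i m b)) t = t := by
    intro i b t
    have := F.act_apply (ρ := ρ) m i b t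
    rw [hm] at this
    simp only [Equiv.Perm.coe_one, id_eq, Sigma.mk.injEq, heq_eq_eq, Prod.mk.injEq,
      true_and] at this
    exact ⟨this.1.symm, this.2.symm⟩
  have h1 : ∀ i b, F.q i m b = b := fun i b => (h i b (T i).root).1
  refine F.inj m (fun i => Equiv.ext fun b => h1 i b) fun i b => ?_
  apply (hρ i).1
  ext t
  have := (h i b t).2
  rw [h1] at this
  rw [this]; simp

theorem ForestData.mem_range (F : ForestData M B G) (m : M) (f : Equiv.Perm (FV B T))
    (σ : ∀ i, Equiv.Perm (B i)) (γ : ∀ i, B i → G i)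
    (h : ∀ i b t, f ⟨i, b, t⟩ = ⟨i, σ i b, ρ i (γ i (σ i b)) t⟩)
    (hq : ∀ i, F.q i m = σ i) (hg : F.g m = γ) : F.act ρ m = f := by
  ext1 ⟨i, b, t⟩
  rw [h, F.act_apply, hq, hg]

end Forest

/-! ### Cones -/

open Classical in
/-- Parent map of the cone. -/
noncomputable def coneP {V : Type} (p : V → V) : Option V → Option V
  | none => none
  | some v => if p v = v then none else some (p v)

theorem coneP_reach {V : Type} (p : V → V) (h : ∀ v, ∃ n : ℕ, p (p^[n] v) = p^[n] v)
    (v : Option V) : ∃ n : ℕ, (coneP p)^[n] v = none := by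
  cases v with
  | none => exact ⟨0, rfl⟩
  | some v =>
    obtain ⟨n, hn⟩ := h v
    induction n generalizing v with
    | zero => exact ⟨1, by simpa [coneP] using hn⟩
    | succ n ih =>
      by_cases hv : p v = v
      · exact ⟨1, by simpa [coneP] using hv⟩
      · obtain ⟨k, hk⟩ := ih (p v) hn
        exact ⟨k + 1, by simpa [coneP, hv] using hk⟩

theorem coneP_comm {V : Type} (p : V → V) (f : Equiv.Perm V) (h : ∀ v, f (p v) = p (f v))
    (v : Option V) : Equiv.optionCongr f (coneP p v) = coneP p (Equiv.optionCongr f v) := by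
  cases v with
  | none => rfl
  | some v =>
    by_cases hv : p v = v
    · have : p (f v) = f v := by rw [← h, hv]
      simp [coneP, hv, this]
    · have : ¬ p (f v) = f v := by rw [← h]; simpa using hv
      simp [coneP, hv, this, h]

theorem coneP_comm' {V : Type} (p : V → V) (f : Equiv.Perm (Option V))
    (h : ∀ v, f (coneP p v) = coneP p (f v)) :
    ∃ f' : Equiv.Perm V, Equiv.optionCongr f' = f ∧ ∀ v, f' (p v) = p (f' v) := by
  have h0 : f none = none := by
    have := h none
    cases hf : f none with
    | none => rfl
    | some w =>
      rw [hf] at this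
      by_cases hw : p w = w
      · simp [coneP, hw, hf] at this
      · simp [coneP, hw, hf] at this
        exact absurd this.symm hw
  have h1 : ∀ v, f (some v) = some (Equiv.removeNone f v) := fun v => by
    cases hv : f (some v) with
    | none =>
      rw [← h0] at hv
      exact absurd (f.injective hv) (by simp)
    | some w => rw [Equiv.removeNone_some f ⟨w, hv⟩, hv]
  refine ⟨Equiv.removeNone f, ?_, fun v => ?_⟩
  · ext1 v
    cases v with
    | none => simp [h0]
    | some v => simp [h1]
  · have := h (some v)
    rw [h1] at this
    generalize hw : Equiv.removeNone f v = w at this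
    by_cases hv : p v = v <;> by_cases hv' : p w = w
    · rw [hv, hw, hv']
    · simp [coneP, hv, hv', h0] at this
    · simp [coneP, hv, hv', h1] at this
    · simpa [coneP, hv, hv', h1] using this

/-! ### Joins of trees -/

theorem join_realizes {I : Type} [Fintype I] {B : I → Type} [∀ i, Fintype (B i)] {T : I → RTree}
    {G : I → Type} [∀ i, Group (G i)] {ρ : ∀ i, G i →* Equiv.Perm (T i).V}
    {M : Type} [Group M]
    (hc : Function.Injective fun i => Nat.card (T i).V)
    (hρ : ∀ i, Realizes (T i) (G i) (ρ i)) (F : ForestData M B G)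
    (hF : ∀ (σ : ∀ i, Equiv.Perm (B i)) (γ : ∀ i, B i → G i), ∃ m, (∀ i, F.q i m = σ i) ∧ F.g m = γ) :
    ∃ (T' : RTree) (ρ' : M →* Equiv.Perm T'.V), Realizes T' M ρ' ∧
      Nat.card T'.V = Nat.card (FV B T) + 1 := by
  have : ∀ i, Fintype (T i).V := fun i => (T i).fin
  let oc : Equiv.Perm (FV B T) →* Equiv.Perm (Option (FV B T)) :=
    { toFun := Equiv.optionCongr
      map_one' := by ext1 v; cases v <;> rfl
      map_mul' := fun a b => by ext1 v; cases v <;> rfl }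
  refine ⟨⟨Option (FV B T), inferInstance, coneP fp, none, rfl, coneP_reach fp fp_reach⟩,
    oc.comp (F.act ρ), ⟨?_, fun f => ⟨fun h => ?_, ?_⟩⟩, ?_⟩
  · have : Function.Injective oc := Equiv.optionCongr_injective
    exact this.comp (F.act_inj hρ)
  · obtain ⟨f', rfl, hf'⟩ := coneP_comm' fp f h
    obtain ⟨σ, γ, h1⟩ := forest_aut hc hρ f' hf'
    obtain ⟨m, hm1, hm2⟩ := hF σ γ
    exact ⟨m, congrArg Equiv.optionCongr (F.mem_range m f' σ γ h1 hm1 hm2)⟩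
  · rintro ⟨m, rfl⟩ v
    exact coneP_comm fp _ (F.act_comm hρ m) v
  · simp [Nat.card_eq_fintype_card]

/-- Realizable by a rooted tree with `N` vertices. -/
def RealN (G : Type) [Group G] (N : ℕ) : Prop :=
  ∃ (T : RTree) (ρ : G →* Equiv.Perm T.V), Realizes T G ρ ∧ Nat.card T.V = N

theorem RealN.succ {G : Type} [Group G] {N : ℕ} (h : RealN G N) : RealN G (N + 1) := by
  obtain ⟨T, ρ, h1, h2⟩ := h
  obtain ⟨T', ρ', h3, h4⟩ := join_realizes (I := Unit) (B := fun _ => Unit) (T := fun _ => T)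
    (G := fun _ => G) (ρ := fun _ => ρ) (M := G) (fun _ _ _ => rfl) (fun _ => h1)
    { q := fun _ => 1
      g := fun m _ _ => m
      g_one := fun _ _ => rfl
      g_mul := fun _ _ _ _ => rfl
      inj := fun m _ h => h () () }
    (fun σ γ => ⟨γ () (), fun i => Subsingleton.elim _ _, rfl⟩)
  refine ⟨T', ρ', h3, ?_⟩
  rw [h4, ← h2]
  congr 1
  exact Nat.card_congr ((Equiv.uniqueSigma (fun _ : Unit => Unit × T.V)).trans
    (Equiv.punitProd T.V))

/-- Realizable by all large rooted trees. -/
def Rlz (G : Type) [Group G] : Prop := ∃ N0, ∀ N, N0 ≤ N → RealN G N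

theorem RealN.real {G : Type} [Group G] {N : ℕ} (h : RealN G N) : Rlz G :=
  ⟨N, fun n hn => Nat.le_induction h (fun _ _ h => h.succ) n hn⟩

theorem real_family {I : Type} [Finite I] {G : I → Type} [∀ i, Group (G i)]
    (h : ∀ i, Rlz (G i)) : ∃ (T : I → RTree) (ρ : ∀ i, G i →* Equiv.Perm (T i).V),
      (Function.Injective fun i => Nat.card (T i).V) ∧ ∀ i, Realizes (T i) (G i) (ρ i) := by
  have := Fintype.ofFinite I
  choose N hN using h
  let e := Fintype.equivFin I
  have := fun i => hN i (Finset.univ.sup N + (e i : ℕ))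
    ((Finset.le_sup (Finset.mem_univ i)).trans (Nat.le_add_right _ _))
  choose T ρ h1 h2 using this
  refine ⟨T, ρ, fun i j hij => ?_, h1⟩
  simp only [h2] at hij
  exact e.injective (Fin.ext (Nat.add_left_cancel hij))

theorem real_triv : Rlz PUnit := by
  refine RealN.real (N := 1) ⟨⟨Unit, inferInstance, id, (), rfl, fun v => ⟨0, rfl⟩⟩, 1,
    ⟨fun _ _ _ => rfl, fun f => ⟨fun _ => ⟨PUnit.unit, Subsingleton.elim (α := Equiv.Perm Unit) _ _⟩, fun _ _ => rfl⟩⟩, ?_⟩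
  simp

theorem real_congr {G H : Type} [Group G] [Group H] (h : Rlz G) (e : G ≃* H) : Rlz H := by
  obtain ⟨N0, h⟩ := h
  obtain ⟨T, ρ, h1, h2⟩ := h N0 le_rfl
  refine RealN.real (N := N0) ⟨T, ρ.comp e.symm.toMonoidHom,
    ⟨h1.1.comp e.symm.injective, fun f => ?_⟩, h2⟩
  rw [h1.2]
  constructor
  · rintro ⟨g, rfl⟩
    exact ⟨e g, by simp⟩
  · rintro ⟨g, rfl⟩
    exact ⟨_, rfl⟩

/-- helper family -/
@[reducible] def PG (G H : Type) : Bool → Type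
  | true => G
  | false => H

instance (G H : Type) [Group G] [Group H] : ∀ i, Group (PG G H i)
  | true => inferInstanceAs (Group G)
  | false => inferInstanceAs (Group H)

theorem real_prod {G H : Type} [Group G] [Group H] (h : Rlz G) (h' : Rlz H) :
    Rlz (G × H) := by
  obtain ⟨T, ρ, hc, hρ⟩ := real_family (I := Bool) (G := PG G H)
    (fun i => match i with | true => h | false => h')
  obtain ⟨T', ρ', h3, h4⟩ := join_realizes (I := Bool) (B := fun _ => Unit) (T := T)
    (G := PG G H) (ρ := ρ) (M := G × H) hc hρ
    { q := fun _ => 1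
      g := fun m i _ => match i with
        | true => m.1
        | false => m.2
      g_one := fun i _ => by cases i <;> rfl
      g_mul := fun _ _ i _ => by cases i <;> rfl
      inj := fun m _ h => Prod.ext (h true ()) (h false ()) }
    (fun σ γ => ⟨(γ true (), γ false ()), fun i => Subsingleton.elim (α := Equiv.Perm Unit) _ _, by
      funext i u
      cases i <;> rfl⟩)
  exact RealN.real ⟨T', ρ', h3, h4⟩

theorem real_wreath {G : Type} [Group G] (n : ℕ) (h : Rlz G) :
    Rlz ((Fin n → G) ⋊[permHom (Fin n) G] Equiv.Perm (Fin n)) := by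
  obtain ⟨T, ρ, hc, hρ⟩ := real_family (I := Unit) (G := fun _ => G) (fun _ => h)
  obtain ⟨T', ρ', h3, h4⟩ := join_realizes (I := Unit) (B := fun _ => Fin n) (T := T)
    (G := fun _ => G) (ρ := ρ) (M := (Fin n → G) ⋊[permHom (Fin n) G] Equiv.Perm (Fin n)) hc hρ
    { q := fun _ => SemidirectProduct.rightHom
      g := fun m i b => m.left b
      g_one := fun i _ => rfl
      g_mul := fun m m' i b => by
        change m.left _ * m'.left (m.right.symm (m.right b)) = _
        rw [Equiv.symm_apply_apply]
      inj := fun m h1 h2 => SemidirectProduct.ext (funext fun b => h2 () b) (h1 ()) }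
    (fun σ γ => ⟨⟨γ (), σ ()⟩, fun i => rfl, rfl⟩)
  exact RealN.real ⟨T', ρ', h3, h4⟩

theorem JordanT.rlz {G : Type} [Group G] (h : JordanT G) : Rlz G := by
  induction h with
  | triv => exact real_triv
  | congr _ e ih => exact real_congr ih e
  | prod _ _ ih ih' => exact real_prod ih ih'
  | wreath n _ _ ih => exact real_wreath n ih

/-! ### The graph with given core -/

section Big

variable {V : Type} {p : V → V} {Γ : SimpleGraph V}

/-- core graph plus tree edges -/
def bigG (p : V → V) (Γ : SimpleGraph V) : SimpleGraph V :=
  Γ ⊔ SimpleGraph.fromRel (fun u v => p u = v)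

theorem bigG_adj (u v : V) :
    (bigG p Γ).Adj u v ↔ Γ.Adj u v ∨ (u ≠ v ∧ (p u = v ∨ p v = u)) := by
  simp [bigG, SimpleGraph.fromRel_adj]

theorem no_two_cycle (hreach : ∀ v, ∃ n : ℕ, p (p^[n] v) = p^[n] v) (v : V)
    (h : p (p v) = v) : p v = v := by
  obtain ⟨n, hn⟩ := hreach v
  have : p^[n] v = v ∨ p^[n] v = p v := by
    clear hn
    induction n with
    | zero => exact Or.inl rfl
    | succ n ih =>
      rw [Function.iterate_succ_apply']
      rcases ih with ih | ih <;> rw [ih]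
      · exact Or.inr rfl
      · exact Or.inl h
  rcases this with h1 | h1 <;> rw [h1] at hn
  · exact hn
  · rw [h] at hn; exact hn.symm

theorem bigG_core [Finite V] (hreach : ∀ v, ∃ n : ℕ, p (p^[n] v) = p^[n] v)
    (hΓ : ∀ u v, Γ.Adj u v → p u = u)
    (h2 : ∀ v, p v = v → ∃ a b, a ≠ b ∧ Γ.Adj v a ∧ Γ.Adj v b)
    (f : Equiv.Perm V) (hf : ∀ u v, (bigG p Γ).Adj (f u) (f v) ↔ (bigG p Γ).Adj u v)
    (v : V) (hv : p v = v) : p (f v) = f v := by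
  by_contra hcon
  let A : Set V := {w | p w ≠ w ∧ ∃ c, p c = c ∧ f c = w}
  have hA : A ⊆ p '' A := by
    rintro w ⟨hw, c, hc, rfl⟩
    obtain ⟨a, b, hab, ha, hb⟩ := h2 c hc
    have key : ∀ x, Γ.Adj c x → p (f c) ≠ f x → f c ∈ p '' A := by
      intro x hx hne
      have h1 : (bigG p Γ).Adj (f c) (f x) := (hf _ _).2 ((bigG_adj _ _).2 (Or.inl hx))
      rcases (bigG_adj _ _).1 h1 with h3 | ⟨h3, h4 | h4⟩
      · exact absurd (hΓ _ _ h3) hw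
      · exact absurd h4 hne
      · refine ⟨f x, ⟨fun h5 => h3 (h4.symm.trans h5), x, hΓ _ _ hx.symm, rfl⟩, h4⟩
    by_cases h6 : p (f c) = f a
    · refine key b hb fun h7 => hab (f.injective (h6.symm.trans h7))
    · exact key a ha h6
  have hAe : A = p '' A :=
    Set.eq_of_subset_of_ncard_le hA (Set.ncard_image_le (Set.toFinite _)) (Set.toFinite _)
  have hit : ∀ n : ℕ, p^[n] (f v) ∈ A := by
    intro n
    induction n with
    | zero => exact ⟨hcon, v, hv, rfl⟩
    | succ n ih =>
      rw [Function.iterate_succ_apply', hAe]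
      exact ⟨_, ih, rfl⟩
  obtain ⟨n, hn⟩ := hreach (f v)
  exact (hit n).1 hn

theorem bigG_aut [Finite V] (hreach : ∀ v, ∃ n : ℕ, p (p^[n] v) = p^[n] v)
    (hΓ : ∀ u v, Γ.Adj u v → p u = u)
    (h2 : ∀ v, p v = v → ∃ a b, a ≠ b ∧ Γ.Adj v a ∧ Γ.Adj v b)
    (f : Equiv.Perm V) (hf : ∀ u v, (bigG p Γ).Adj (f u) (f v) ↔ (bigG p Γ).Adj u v) :
    (∀ v, f (p v) = p (f v)) ∧ ∀ u v, Γ.Adj (f u) (f v) ↔ Γ.Adj u v := by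
  have c1 := bigG_core hreach hΓ h2 f hf
  have c2 : ∀ v, p (f v) = f v → p v = v := fun v hv => by
    have := bigG_core hreach hΓ h2 f.symm (fun u v => by rw [← hf]; simp) (f v) hv
    simpa using this
  constructor
  · intro v
    obtain ⟨n, hn⟩ := hreach v
    induction n generalizing v with
    | zero =>
      have hn : p v = v := hn
      rw [c1 v hn, hn]
    | succ n ih =>
      by_cases hv : p v = v
      · rw [c1 v hv, hv]
      · have h1 := ih (p v) hn
        have h3 : (bigG p Γ).Adj (f v) (f (p v)) :=
          (hf _ _).2 ((bigG_adj _ _).2 (Or.inr ⟨fun h => hv h.symm, Or.inl rfl⟩))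
        rcases (bigG_adj _ _).1 h3 with h4 | ⟨h4, h5 | h5⟩
        · exact absurd (c2 _ (hΓ _ _ h4)) hv
        · exact h5.symm
        · rw [← h1] at h5
          exact absurd (no_two_cycle hreach v (f.injective h5)) hv
  · have key : ∀ u v, Γ.Adj u v ↔ (bigG p Γ).Adj u v ∧ p u = u ∧ p v = v := by
      intro u v
      rw [bigG_adj]
      constructor
      · intro h
        exact ⟨Or.inl h, hΓ _ _ h, hΓ _ _ h.symm⟩
      · rintro ⟨h | ⟨h, h' | h'⟩, hu, hv⟩
        · exact h
        · exact absurd (hu.symm.trans h') h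
        · exact absurd (h'.symm.trans hv) h
    intro u v
    rw [key, key u v, hf]
    exact and_congr_right fun _ => and_congr ⟨c2 u, c1 u⟩ ⟨c2 v, c1 v⟩

theorem bigG_aut' (f : Equiv.Perm V) (h : ∀ v, f (p v) = p (f v))
    (h' : ∀ u v, Γ.Adj (f u) (f v) ↔ Γ.Adj u v) (u v : V) :
    (bigG p Γ).Adj (f u) (f v) ↔ (bigG p Γ).Adj u v := by
  simp [bigG_adj, h', ← h]

theorem bigG_bicyclic [Finite V] (hreach : ∀ v, ∃ n : ℕ, p (p^[n] v) = p^[n] v)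
    (hΓ : ∀ u v, Γ.Adj u v → p u = u)
    (r : V) (hr : ∀ v, p v = v → Γ.Reachable r v)
    (hE : Γ.edgeSet.ncard = {v | p v = v}.ncard + 1) : (bigG p Γ).IsBicyclic := by
  constructor
  · rw [SimpleGraph.connected_iff_exists_forall_reachable]
    refine ⟨r, fun v => ?_⟩
    obtain ⟨n, hn⟩ := hreach v
    induction n generalizing v with
    | zero => exact (hr v hn).mono le_sup_left
    | succ n ih =>
      by_cases hv : p v = v
      · exact (hr v hv).mono le_sup_left
      · refine (ih (p v) hn).trans (SimpleGraph.Adj.reachable ?_)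
        exact (bigG_adj _ _).2 (Or.inr ⟨hv, Or.inr rfl⟩)
  · have h1 : (bigG p Γ).edgeSet = Γ.edgeSet ∪ (fun v => s(v, p v)) '' {v | p v = v}ᶜ := by
      ext e
      induction e with
      | _ u v =>
        simp only [SimpleGraph.mem_edgeSet, bigG_adj, Set.mem_union, Set.mem_image,
          Set.mem_compl_iff, Set.mem_ofPred_eq, Sym2.eq_iff]
        refine or_congr_right ⟨?_, ?_⟩
        · rintro ⟨h, h' | h'⟩
          · exact ⟨u, fun h3 => h (h3.symm.trans h'), Or.inl ⟨rfl, h'⟩⟩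
          · exact ⟨v, fun h3 => h (h'.symm.trans h3), Or.inr ⟨rfl, h'⟩⟩
        · rintro ⟨w, h, ⟨rfl, rfl⟩ | ⟨rfl, rfl⟩⟩
          · exact ⟨fun h3 => h h3.symm, Or.inl rfl⟩
          · exact ⟨h, Or.inr rfl⟩
    rw [h1, Set.ncard_union_eq, Set.InjOn.ncard_image, hE,
      ← Set.ncard_add_ncard_compl {v | p v = v}]
    · omega
    · intro v hv w hw h
      simp only [Sym2.eq_iff] at h
      rcases h with h | ⟨h, h'⟩
      · exact h.1
      · exact absurd (no_two_cycle hreach v (by rw [h', ← h])) hv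
    · rw [Set.disjoint_right]
      rintro _ ⟨v, hv, rfl⟩ h
      exact hv (hΓ _ _ h)

end Big

/-- The embedding of the core. -/
def coreEmb {I : Type} (B : I → Type) (T : I → RTree) : (Σ i, B i) ↪ FV B T where
  toFun x := ⟨x.1, x.2, (T x.1).root⟩
  inj' := by
    rintro ⟨i, b⟩ ⟨j, b'⟩ h
    simp only [Sigma.mk.injEq] at h
    obtain ⟨rfl, h⟩ := h
    simpa using h

theorem core_realize {I : Type} [Fintype I] {B : I → Type} [∀ i, Fintype (B i)] {T : I → RTree}
    {G : I → Type} [∀ i, Group (G i)] {ρ : ∀ i, G i →* Equiv.Perm (T i).V}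
    {M : Type} [Group M]
    (hc : Function.Injective fun i => Nat.card (T i).V)
    (hρ : ∀ i, Realizes (T i) (G i) (ρ i)) (F : ForestData M B G)
    (Γ : SimpleGraph (Σ i, B i)) (hconn : Γ.Connected)
    (hE : Γ.edgeSet.ncard = Nat.card (Σ i, B i) + 1)
    (h2 : ∀ v, ∃ a b, a ≠ b ∧ Γ.Adj v a ∧ Γ.Adj v b)
    (hF : ∀ (σ : ∀ i, Equiv.Perm (B i)) (γ : ∀ i, B i → G i),
      (∀ x y, Γ.Adj x y → Γ.Adj ⟨x.1, σ x.1 x.2⟩ ⟨y.1, σ y.1 y.2⟩) →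
        ∃ m, (∀ i, F.q i m = σ i) ∧ F.g m = γ)
    (hF' : ∀ m x y, Γ.Adj ⟨x.1, F.q x.1 m x.2⟩ ⟨y.1, F.q y.1 m y.2⟩ ↔ Γ.Adj x y) :
    ∃ (V : Type) (_ : Fintype V) (Δ : SimpleGraph V),
      Δ.IsBicyclic ∧ Nonempty (M ≃* (Δ ≃g Δ)) := by
  have : ∀ i, Fintype (T i).V := fun i => (T i).fin
  have hfix : ∀ v : FV B T, fp v = v ↔ ∃ x, coreEmb B T x = v := by
    intro v
    rw [fp_fix]
    constructor
    · intro h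
      refine ⟨⟨v.1, v.2.1⟩, ?_⟩
      change (⟨v.1, v.2.1, (T v.1).root⟩ : FV B T) = v
      rw [← h]
    · rintro ⟨x, rfl⟩
      rfl
  have hΓ : ∀ u v, (Γ.map (coreEmb B T)).Adj u v → fp u = u := by
    intro u v h
    obtain ⟨u', v', _, hu, _⟩ := (SimpleGraph.map_adj _ _ _ _).1 h
    exact (hfix u).2 ⟨u', hu⟩
  have h2' : ∀ v, fp v = v → ∃ a b, a ≠ b ∧ (Γ.map (coreEmb B T)).Adj v a ∧
      (Γ.map (coreEmb B T)).Adj v b := by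
    intro v hv
    obtain ⟨x, rfl⟩ := (hfix v).1 hv
    obtain ⟨a, b, hab, ha, hb⟩ := h2 x
    exact ⟨coreEmb B T a, coreEmb B T b, fun h => hab ((coreEmb B T).injective h),
      (SimpleGraph.map_adj_apply).2 ha, (SimpleGraph.map_adj_apply).2 hb⟩
  have hact : ∀ m u v, (Γ.map (coreEmb B T)).Adj (F.act ρ m u) (F.act ρ m v) ↔
      (Γ.map (coreEmb B T)).Adj u v := by
    have h1 : ∀ m u v, (Γ.map (coreEmb B T)).Adj u v →
        (Γ.map (coreEmb B T)).Adj (F.act ρ m u) (F.act ρ m v) := by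
      intro m u v h
      obtain ⟨x, y, hxy, rfl, rfl⟩ := (SimpleGraph.map_adj _ _ _ _).1 h
      have h3 : ∀ x : Σ i, B i, F.act ρ m (coreEmb B T x) =
          coreEmb B T ⟨x.1, F.q x.1 m x.2⟩ := by
        intro x
        have h4 : fp (F.act ρ m (coreEmb B T x)) = F.act ρ m (coreEmb B T x) := by
          rw [← F.act_comm hρ, (hfix _).2 ⟨x, rfl⟩]
        rw [fp_fix] at h4
        change (⟨_, _, (F.act ρ m (coreEmb B T x)).2.2⟩ : FV B T) = _
        rw [h4]
        rfl
      rw [h3, h3, SimpleGraph.map_adj_apply]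
      exact (hF' _ _ _).2 hxy
    intro m u v
    refine ⟨fun h => ?_, h1 m u v⟩
    have := h1 m⁻¹ _ _ h
    simpa [← Equiv.Perm.mul_apply, ← map_mul] using this
  refine ⟨FV B T, inferInstance, bigG fp (Γ.map (coreEmb B T)), ?_, ?_⟩
  · obtain ⟨r⟩ := hconn.nonempty
    refine bigG_bicyclic fp_reach hΓ (coreEmb B T r) ?_ ?_
    · intro v hv
      obtain ⟨x, rfl⟩ := (hfix v).1 hv
      exact (hconn.preconnected r x).map (SimpleGraph.Embedding.map (coreEmb B T) Γ).toHom
    · rw [SimpleGraph.edgeSet_map, Set.ncard_image_of_injective _ (coreEmb B T).sym2Map.injective, hE]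
      have : {v : FV B T | fp v = v} = Set.range (coreEmb B T) := Set.ext hfix
      rw [this, ← Set.image_univ, Set.ncard_image_of_injective _ (coreEmb B T).injective,
        Set.ncard_univ]
  · let Φ : M →* (bigG fp (Γ.map (coreEmb B T)) ≃g bigG fp (Γ.map (coreEmb B T))) :=
      { toFun := fun m => ⟨F.act ρ m, fun {a b} => bigG_aut' _ (F.act_comm hρ m) (hact m) a b⟩
        map_one' := by ext1 v; exact DFunLike.congr_fun (map_one (F.act ρ)) v
        map_mul' := fun a b => by
          ext1 v; exact DFunLike.congr_fun (map_mul (F.act ρ) a b) v }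
    refine ⟨MulEquiv.ofBijective Φ ⟨?_, ?_⟩⟩
    · intro a b h
      exact F.act_inj hρ (congrArg RelIso.toEquiv h)
    · intro f
      obtain ⟨h3, h4⟩ := bigG_aut fp_reach hΓ h2' f.toEquiv (fun u v => f.map_rel_iff)
      obtain ⟨σ, γ, h5⟩ := forest_aut hc hρ f.toEquiv h3
      have h6 : ∀ x : Σ i, B i, f.toEquiv (coreEmb B T x) = coreEmb B T ⟨x.1, σ x.1 x.2⟩ := by
        intro x
        have h7 : fp (f.toEquiv (coreEmb B T x)) = f.toEquiv (coreEmb B T x) := by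
          rw [← h3, (hfix _).2 ⟨x, rfl⟩]
        have h8 : f.toEquiv (coreEmb B T x) = _ := h5 x.1 x.2 (T x.1).root
        rw [h8, fp_fix] at h7
        rw [h8]
        simp only at h7
        rw [h7]
        rfl
      obtain ⟨m, hm1, hm2⟩ := hF σ γ (fun x y hxy => by
        have h9 := (h4 (coreEmb B T x) (coreEmb B T y)).2 (SimpleGraph.map_adj_apply.2 hxy)
        rw [h6, h6, SimpleGraph.map_adj_apply] at h9
        exact h9)
      refine ⟨m, ?_⟩
      have := F.mem_range (ρ := ρ) m f.toEquiv σ γ h5 hm1 hm2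
      ext1 v
      exact DFunLike.congr_fun this v

/-! ### The rigid case: trees hanging from a diamond -/

/-- helper family -/
@[reducible] def DG (G : Type) : Option (Fin 3) → Type
  | none => G
  | some _ => PUnit

instance (G : Type) [Group G] : ∀ i, Group (DG G i)
  | none => inferInstanceAs (Group G)
  | some _ => inferInstanceAs (Group PUnit)

/-- The diamond graph. -/
def diamond : SimpleGraph (Σ _ : Option (Fin 3), Unit) where
  Adj x y := x.1 ≠ y.1 ∧ (x.1 = none ∨ y.1 = none ∨ x.1 = some 2 ∨ y.1 = some 2)
  symm := ⟨by intro x y; tauto⟩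
  loopless := ⟨by intro x h; exact h.1 rfl⟩

instance : DecidableRel diamond.Adj := fun x y =>
  inferInstanceAs (Decidable (x.1 ≠ y.1 ∧ (x.1 = none ∨ y.1 = none ∨ x.1 = some 2 ∨ y.1 = some 2)))

theorem rigid_case {G : Type} [Group G] (h : Rlz G) :
    ∃ (V : Type) (_ : Fintype V) (Δ : SimpleGraph V),
      Δ.IsBicyclic ∧ Nonempty (G ≃* (Δ ≃g Δ)) := by
  obtain ⟨T, ρ, hc, hρ⟩ := real_family (I := Option (Fin 3)) (G := DG G)
    (fun i => match i with | none => h | some _ => real_triv)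
  refine core_realize (B := fun _ => Unit) hc hρ
    { q := fun _ => 1
      g := fun m i _ => match i with
        | none => m
        | some _ => PUnit.unit
      g_one := fun i _ => by cases i <;> rfl
      g_mul := fun _ _ i _ => by cases i <;> rfl
      inj := fun m _ h => h none () } diamond ?_ ?_ ?_ ?_ ?_
  · rw [SimpleGraph.connected_iff_exists_forall_reachable]
    refine ⟨⟨none, ()⟩, ?_⟩
    rintro ⟨_ | i, ⟨⟩⟩
    · exact SimpleGraph.Reachable.refl _
    · exact SimpleGraph.Adj.reachable ⟨by simp, Or.inl rfl⟩
  · rw [Set.ncard_eq_toFinset_card', Nat.card_eq_fintype_card]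
    decide +kernel
  · decide +kernel
  · intro σ γ _
    refine ⟨γ none (), fun i => Subsingleton.elim (α := Equiv.Perm Unit) _ _, ?_⟩
    funext i b
    cases i <;> rfl
  · intro m x y
    rfl

/-! ### The theta graph -/

/-- Types of vertices. -/
inductive TI
  | c | u | m | x
  deriving DecidableEq

instance : Fintype TI := ⟨{.c, .u, .m, .x}, by intro i; cases i <;> simp⟩

/-- vertices of each type -/
@[reducible] def TB : TI → Type
  | .c => Unit
  | .u => ZMod 2
  | .m => ZMod 2
  | .x => ZMod 2 × ZMod 2

instance : ∀ i, Fintype (TB i)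
  | .c => inferInstanceAs (Fintype Unit)
  | .u => inferInstanceAs (Fintype (ZMod 2))
  | .m => inferInstanceAs (Fintype (ZMod 2))
  | .x => inferInstanceAs (Fintype (ZMod 2 × ZMod 2))

instance : ∀ i, DecidableEq (TB i)
  | .c => inferInstanceAs (DecidableEq Unit)
  | .u => inferInstanceAs (DecidableEq (ZMod 2))
  | .m => inferInstanceAs (DecidableEq (ZMod 2))
  | .x => inferInstanceAs (DecidableEq (ZMod 2 × ZMod 2))

/-- groups of each type -/
@[reducible] def TG (C D H K : Type) : TI → Type
  | .c => C
  | .u => H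
  | .m => K
  | .x => D

instance (C D H K : Type) [Group C] [Group D] [Group H] [Group K] : ∀ i, Group (TG C D H K i)
  | .c => inferInstanceAs (Group C)
  | .u => inferInstanceAs (Group H)
  | .m => inferInstanceAs (Group K)
  | .x => inferInstanceAs (Group D)

/-- adjacency of the theta graph -/
def thetaAdj : (Σ i, TB i) → (Σ i, TB i) → Bool
  | ⟨.c, _⟩, ⟨.u, _⟩ => true
  | ⟨.u, _⟩, ⟨.c, _⟩ => true
  | ⟨.u, i⟩, ⟨.x, a⟩ => decide (i = a.1)
  | ⟨.x, a⟩, ⟨.u, i⟩ => decide (i = a.1)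
  | ⟨.m, j⟩, ⟨.x, a⟩ => decide (j = a.2)
  | ⟨.x, a⟩, ⟨.m, j⟩ => decide (j = a.2)
  | _, _ => false

/-- The theta graph. -/
def theta : SimpleGraph (Σ i, TB i) where
  Adj x y := thetaAdj x y = true
  symm := ⟨by decide +kernel⟩
  loopless := ⟨by decide +kernel⟩

instance : DecidableRel theta.Adj := fun x y => inferInstanceAs (Decidable (thetaAdj x y = true))

theorem theta_connected : theta.Connected := by
  rw [SimpleGraph.connected_iff_exists_forall_reachable]
  refine ⟨⟨.c, ()⟩, ?_⟩
  have hu : ∀ i, theta.Reachable ⟨.c, ()⟩ ⟨.u, i⟩ := fun i =>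
    SimpleGraph.Adj.reachable (show thetaAdj _ _ = true from rfl)
  have hx : ∀ a, theta.Reachable ⟨.c, ()⟩ ⟨.x, a⟩ := fun a =>
    (hu a.1).trans (SimpleGraph.Adj.reachable
      (show thetaAdj _ _ = true by simp [thetaAdj]))
  have hm : ∀ a, theta.Reachable ⟨.c, ()⟩ ⟨.m, a⟩ := fun a =>
    (hx (0, a)).trans (SimpleGraph.Adj.reachable
      (show thetaAdj _ _ = true by simp [thetaAdj]))
  rintro ⟨_ | _ | _ | _, a⟩
  · exact SimpleGraph.Reachable.refl _
  · exact hu a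
  · exact hm a
  · exact hx a

theorem perm_zmod2 : ∀ σ : Equiv.Perm (ZMod 2), ∀ i, σ i = σ 0 + i := by decide +kernel

/-- The action on vertices of each type. -/
def TQ : ∀ i, K4 →* Equiv.Perm (TB i)
  | .c => 1
  | .u => (transPermHom (ZMod 2)).comp fstK
  | .m => (transPermHom (ZMod 2)).comp sndK
  | .x => transPermHom (ZMod 2 × ZMod 2)

theorem TQ_u (k : K4) (i : ZMod 2) : TQ .u k i = (Multiplicative.toAdd k).1 + i := rfl
theorem TQ_m (k : K4) (i : ZMod 2) : TQ .m k i = (Multiplicative.toAdd k).2 + i := rfl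
theorem TQ_x (k : K4) (i : ZMod 2 × ZMod 2) : TQ .x k i = Multiplicative.toAdd k + i := rfl

theorem theta_TQ : ∀ (k : K4) (x y : Σ i, TB i),
    theta.Adj ⟨x.1, TQ x.1 k x.2⟩ ⟨y.1, TQ y.1 k y.2⟩ ↔ theta.Adj x y := by
  rintro k ⟨_ | _ | _ | _, a⟩ ⟨_ | _ | _ | _, b⟩ <;>
    simp only [theta, thetaAdj, decide_eq_true_eq]
  · exact add_right_inj (Multiplicative.toAdd k).1
  · exact add_right_inj (Multiplicative.toAdd k).2
  · exact add_right_inj (Multiplicative.toAdd k).1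
  · exact add_right_inj (Multiplicative.toAdd k).2

theorem theta_aut (σ : ∀ i, Equiv.Perm (TB i))
    (h : ∀ x y, theta.Adj x y → theta.Adj ⟨x.1, σ x.1 x.2⟩ ⟨y.1, σ y.1 y.2⟩) :
    ∃ k, ∀ i, TQ i k = σ i := by
  refine ⟨Multiplicative.ofAdd (σ .u 0, σ .m 0), ?_⟩
  rintro (_ | _ | _ | _)
  · exact Subsingleton.elim (α := Equiv.Perm Unit) _ _
  · ext1 i
    exact (perm_zmod2 (σ .u) i).symm
  · ext1 i
    exact (perm_zmod2 (σ .m) i).symm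
  · ext1 a
    have h1 := h ⟨.u, a.1⟩ ⟨.x, a⟩ (by simp [theta, thetaAdj])
    have h2 := h ⟨.m, a.2⟩ ⟨.x, a⟩ (by simp [theta, thetaAdj])
    simp only [theta, thetaAdj, decide_eq_true_eq] at h1 h2
    refine Prod.ext ?_ ?_
    · rw [← h1, TQ_x]
      exact (perm_zmod2 (σ .u) a.1).symm
    · rw [← h2, TQ_x]
      exact (perm_zmod2 (σ .m) a.2).symm

theorem theta_case {M C D H K : Type} [Group M] [Group C] [Group D] [Group H] [Group K]
    (hC : Rlz C) (hD : Rlz D) (hH : Rlz H) (hK : Rlz K)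
    (F : ForestData M TB (TG C D H K)) (k : M → K4) (hk : ∀ m i, F.q i m = TQ i (k m))
    (hF : ∀ (a : K4) (γ : ∀ i, TB i → TG C D H K i), ∃ m, k m = a ∧ F.g m = γ) :
    ∃ (V : Type) (_ : Fintype V) (Δ : SimpleGraph V),
      Δ.IsBicyclic ∧ Nonempty (M ≃* (Δ ≃g Δ)) := by
  obtain ⟨T, ρ, hc, hρ⟩ := real_family (I := TI) (G := TG C D H K)
    (fun i => match i with | .c => hC | .u => hH | .m => hK | .x => hD)
  refine core_realize hc hρ F theta theta_connected ?_ ?_ ?_ ?_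
  · rw [Set.ncard_eq_toFinset_card', Nat.card_eq_fintype_card]
    decide +kernel
  · decide +kernel
  · intro σ γ h
    obtain ⟨a, ha⟩ := theta_aut σ h
    obtain ⟨m, rfl, hm⟩ := hF a γ
    exact ⟨m, fun i => (hk m i).trans (ha i), hm⟩
  · intro m x y
    rw [hk, hk]
    exact theta_TQ _ _ _

theorem TQ_faithful (k : K4) (h : ∀ i, TQ i k = 1) : k = 1 := by
  have := DFunLike.congr_fun (h .x) 0
  rw [TQ_x, add_zero] at this
  exact this

theorem B2_case {C D H K : Type} [Group C] [Group D] [Group H] [Group K]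
    (hC : Rlz C) (hD : Rlz D) (hH : Rlz H) (hK : Rlz K) :
    ∃ (V : Type) (_ : Fintype V) (Δ : SimpleGraph V),
      Δ.IsBicyclic ∧ Nonempty ((C × B2group D H K) ≃* (Δ ≃g Δ)) := by
  let r : C × B2group D H K →* K4 :=
    (SemidirectProduct.rightHom (φ := B2act D H K)).comp (MonoidHom.snd C (B2group D H K))
  let gg : C × B2group D H K → ∀ i, TB i → TG C D H K i := fun m i => match i with
    | .c => fun _ => m.1
    | .u => fun b => m.2.left.2.1 b
    | .m => fun b => m.2.left.2.2 b
    | .x => fun b => m.2.left.1 b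
  refine theta_case hC hD hH hK
    { q := fun i => (TQ i).comp r
      g := gg
      g_one := ?_
      g_mul := ?_
      inj := ?_ } r (fun _ _ => rfl) ?_
  · rintro (_ | _ | _ | _) b <;> rfl
  · rintro m m' (_ | _ | _ | _) b
    · rfl
    · change m.2.left.2.1 _ * m'.2.left.2.1 ((TQ .u (r m)).symm (TQ .u (r m) b)) = _
      rw [Equiv.symm_apply_apply]
    · change m.2.left.2.2 _ * m'.2.left.2.2 ((TQ .m (r m)).symm (TQ .m (r m) b)) = _
      rw [Equiv.symm_apply_apply]
    · change m.2.left.1 _ * m'.2.left.1 ((TQ .x (r m)).symm (TQ .x (r m) b)) = _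
      rw [Equiv.symm_apply_apply]
  · intro m h1 h2
    refine Prod.ext (h2 .c ()) (SemidirectProduct.ext (Prod.ext (funext fun b => h2 .x b)
      (Prod.ext (funext fun b => h2 .u b) (funext fun b => h2 .m b))) (TQ_faithful _ h1))
  · intro a γ
    refine ⟨(γ .c (), ⟨(γ .x, γ .u, γ .m), a⟩), rfl, ?_⟩
    funext i b
    rcases i with _ | _ | _ | _ <;> rfl

theorem B1_case {C D : Type} [Group C] [Group D] (hC : Rlz C) (hD : Rlz D) :
    ∃ (V : Type) (_ : Fintype V) (Δ : SimpleGraph V),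
      Δ.IsBicyclic ∧ Nonempty ((C × wreathK4 D) ≃* (Δ ≃g Δ)) := by
  let r : C × wreathK4 D →* K4 :=
    (SemidirectProduct.rightHom (φ := transAutHom (ZMod 2 × ZMod 2) D)).comp
      (MonoidHom.snd C (wreathK4 D))
  let gg : C × wreathK4 D → ∀ i, TB i → TG C D PUnit PUnit i := fun m i => match i with
    | .c => fun _ => m.1
    | .u => fun b => PUnit.unit
    | .m => fun b => PUnit.unit
    | .x => fun b => m.2.left b
  refine theta_case hC hD real_triv real_triv
    { q := fun i => (TQ i).comp r
      g := gg
      g_one := ?_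
      g_mul := ?_
      inj := ?_ } r (fun _ _ => rfl) ?_
  · rintro (_ | _ | _ | _) b <;> rfl
  · rintro m m' (_ | _ | _ | _) b
    · rfl
    · rfl
    · rfl
    · change m.2.left _ * m'.2.left ((TQ .x (r m)).symm (TQ .x (r m) b)) = _
      rw [Equiv.symm_apply_apply]
  · intro m h1 h2
    exact Prod.ext (h2 .c ()) (SemidirectProduct.ext (funext fun b => h2 .x b) (TQ_faithful _ h1))
  · intro a γ
    refine ⟨(γ .c (), ⟨γ .x, a⟩), rfl, ?_⟩
    funext i b
    rcases i with _ | _ | _ | _ <;> rfl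

/-- Every group in the class `𝒮 = 𝒯 ∪ 𝓑₁ ∪ 𝓑₂` is isomorphic to the
automorphism group of some bicyclic graph. -/
theorem S_realizable_as_aut_bicyclic (G : Type) [Group G] (hG : InS G) :
    ∃ (V : Type) (_ : Fintype V) (Δ : SimpleGraph V),
      Δ.IsBicyclic ∧ Nonempty (G ≃* (Δ ≃g Δ)) := by
  rcases hG with h | ⟨C, D, _, _, hC, hD, ⟨e⟩⟩ | ⟨C, D, H, K, _, _, _, _, hC, hD, hH, hK, ⟨e⟩⟩
  · exact rigid_case h.rlz
  · obtain ⟨V, i, Δ, h, ⟨e'⟩⟩ := B1_case hC.rlz hD.rlz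
    exact ⟨V, i, Δ, h, ⟨e.trans e'⟩⟩
  · obtain ⟨V, i, Δ, h, ⟨e'⟩⟩ := B2_case hC.rlz hD.rlz hH.rlz hK.rlz
    exact ⟨V, i, Δ, h, ⟨e.trans e'⟩⟩
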